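/- arXiv:2512.02565 — 2 statements merged into one kernel-verified Lean document; each statement's English description precedes it below -/
import Mathlib

section
/- Let f₁,…,f_i ∈ A. For a nonempty subset I = {x₁ < x₂ < ⋯ < x_h} of {1,…,i}, set η(I) := f_{x₁}·d(f_{x₂}·d(⋯ f_{x_{h−1}}·d(f_{x_h}) ⋯)) (so η({x}) = f_x). Then, as ℚ-linear endomorphisms of A, (μ_{f₁} ∘ d) ∘ (μ_{f₂} ∘ d) ∘ ⋯ ∘ (μ_{f_i} ∘ d) = Σ_{k=1}^{i} Σ_{{I₁,…,I_k}} μ_{η(I₁)·η(I₂)·⋯·η(I_k)} ∘ d^{k}, where the inner sum runs over all set partitions of {1,…,i} into k nonempty blocks I₁,…,I_k, μ_c is the multiplication operator x ↦ c*x, and d^k is the k-th iterate of d. -/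
/-!
The operator `μ_{f₁} ∘ d` is peeled off from the left, by induction on the set of indices, adding
one new least index `a` at a time. By the Leibniz rule, applying `d` to `(∏_I η(I)) · d^k x`
differentiates either one of the blocks `B` or the factor `d^k x`. After multiplication by `f_a`, a
differentiated block becomes `f_a · d (η(B)) = η({a} ∪ B)`, so `a` joins the block `B`, while
differentiating `d^k x` gives the extra factor `f_a = η({a})`, so `a` opens a block of its own.
Each set partition of `{a} ∪ s` arises exactly once in this way from a partition of `s`. Treating
the second case as joining an empty block `B = ∅` makes the two cases uniform: `insertAt` is the
construction on partitions, and `sum_finpartition_insert` says it is bijective.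
-/


/-- The nested expression `f₁·d(f₂·d(⋯ f_{h−1}·d(f_h) ⋯))` attached to a list
`[f₁, …, f_h]` (equal to `1` on the empty list, and to `f₁` on a singleton). -/
def nest {A : Type*} [CommRing A] (d : A → A) : List A → A
  | [] => 1
  | [x] => x
  | x :: y :: l => x * d (nest d (y :: l))

/-- `η(I) = f_{x₁}·d(f_{x₂}·d(⋯ f_{x_{h−1}}·d(f_{x_h})⋯))` for a subset
`I = {x₁ < ⋯ < x_h}` of `Fin i`. -/
def eta {A : Type*} [CommRing A] (d : A → A) {i : ℕ} (f : Fin i → A)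
    (I : Finset (Fin i)) : A :=
  nest d ((I.sort (· ≤ ·)).map f)

section Partitions

variable {α : Type*} [DecidableEq α]

/-- The partition of `insert a s` obtained from the partition `P` of `s` by adding `a` to the block
`B` of `P`, or by adding the new block `{a}` when `B = ∅`. -/
def insertAt {s : Finset α} {a : α} (ha : a ∉ s) (P : Finpartition s) (B : Finset α)
    (hB : B ∈ insert ∅ P.parts) : Finpartition (insert a s) :=
  Finpartition.ofExistsUnique (insert (insert a B) (P.parts.erase B))
    (by
      have hsub : ∀ t ∈ P.parts, t ⊆ s := fun t ht => P.subset ht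
      have hBs : B ⊆ s := by
        rcases Finset.mem_insert.1 hB with rfl | h
        · simp
        · exact hsub B h
      intro p hp
      rcases Finset.mem_insert.1 hp with rfl | h
      · exact Finset.insert_subset_insert a hBs
      · exact (hsub p (Finset.mem_of_mem_erase h)).trans (Finset.subset_insert a s))
    (by
      have hsub : ∀ t ∈ P.parts, t ⊆ s := fun t ht => P.subset ht
      intro b hb
      by_cases hba : b = a
      · subst hba
        refine ⟨insert b B, by simp, ?_⟩
        rintro t ⟨ht, hbt⟩
        rcases Finset.mem_insert.1 ht with rfl | h
        · rfl
        · exact absurd (hsub t (Finset.mem_of_mem_erase h) hbt) ha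
      · have hbs : b ∈ s := by simpa [hba] using hb
        obtain ⟨t₀, ⟨ht₀, hbt₀⟩, huniq⟩ := P.existsUnique_mem hbs
        by_cases htB : t₀ = B
        · subst htB
          refine ⟨insert a t₀, by simp [hbt₀], ?_⟩
          rintro t ⟨ht, hbt⟩
          rcases Finset.mem_insert.1 ht with rfl | h
          · rfl
          · obtain ⟨h1, h2⟩ := Finset.mem_erase.1 h
            exact absurd (huniq t ⟨h2, hbt⟩) h1
        · refine ⟨t₀, by simp [hbt₀, htB, ht₀], ?_⟩
          rintro t ⟨ht, hbt⟩
          rcases Finset.mem_insert.1 ht with rfl | h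
          · have hbB : b ∈ B := by simpa [hba] using hbt
            rcases Finset.mem_insert.1 hB with rfl | h
            · simp at hbB
            · exact absurd (huniq B ⟨h, hbB⟩).symm htB
          · exact huniq t ⟨Finset.mem_of_mem_erase h, hbt⟩)
    (by
      intro h
      rcases Finset.mem_insert.1 h with h | h
      · exact Finset.insert_ne_empty a B h.symm
      · exact P.empty_notMem_parts (Finset.mem_of_mem_erase h))

lemma insertAt_parts {s : Finset α} {a : α} (ha : a ∉ s) (P : Finpartition s) (B : Finset α)
    (hB : B ∈ insert ∅ P.parts) :
    (insertAt ha P B hB).parts = insert (insert a B) (P.parts.erase B) := rfl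

lemma notMem_of_mem_insert_parts {s : Finset α} {a : α} (ha : a ∉ s) (P : Finpartition s)
    {B : Finset α} (hB : B ∈ insert ∅ P.parts) : a ∉ B := by
  rcases Finset.mem_insert.1 hB with rfl | h
  · simp
  · exact fun h' => ha (P.subset h h')

lemma insert_notMem_erase_parts {s : Finset α} {a : α} (ha : a ∉ s) (P : Finpartition s)
    (B : Finset α) : insert a B ∉ P.parts.erase B := fun h =>
  ha (P.subset (Finset.mem_of_mem_erase h) (Finset.mem_insert_self a B))

lemma insertAt_injective {s : Finset α} {a : α} (ha : a ∉ s) (P P' : Finpartition s)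
    (B B' : Finset α) (hB : B ∈ insert ∅ P.parts) (hB' : B' ∈ insert ∅ P'.parts)
    (h : insertAt ha P B hB = insertAt ha P' B' hB') : P = P' ∧ B = B' := by
  have hp : insert (insert a B) (P.parts.erase B) = insert (insert a B') (P'.parts.erase B') := by
    rw [← insertAt_parts ha P B hB, h, insertAt_parts]
  have haB' := notMem_of_mem_insert_parts ha P' hB'
  have haB := notMem_of_mem_insert_parts ha P hB
  -- `insert a B` and `insert a B'` are both the block containing `a`.
  have hBB : B = B' := by
    have hmem : insert a B ∈ insert (insert a B') (P'.parts.erase B') := by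
      rw [← hp]; exact Finset.mem_insert_self _ _
    rcases Finset.mem_insert.1 hmem with h1 | h1
    · rw [← Finset.erase_insert haB, h1, Finset.erase_insert haB']
    · exact absurd (P'.subset (Finset.mem_of_mem_erase h1) (Finset.mem_insert_self a B)) ha
  subst hBB
  refine ⟨?_, rfl⟩
  have he : P.parts.erase B = P'.parts.erase B := by
    rw [← Finset.erase_insert (insert_notMem_erase_parts ha P B), hp,
      Finset.erase_insert (insert_notMem_erase_parts ha P' B)]
  apply Finpartition.ext
  by_cases hB0 : B = ∅
  · subst hB0
    rwa [Finset.erase_eq_of_notMem P.empty_notMem_parts,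
      Finset.erase_eq_of_notMem P'.empty_notMem_parts] at he
  · have h1 : B ∈ P.parts := by simpa [hB0] using hB
    have h2 : B ∈ P'.parts := by simpa [hB0] using hB'
    rw [← Finset.insert_erase h1, he, Finset.insert_erase h2]

lemma insertAt_surjective {s : Finset α} {a : α} (ha : a ∉ s) (Q : Finpartition (insert a s)) :
    ∃ (P : Finpartition s) (B : Finset α) (hB : B ∈ insert ∅ P.parts),
      insertAt ha P B hB = Q := by
  obtain ⟨T, ⟨hT, haT⟩, hTu⟩ := Q.existsUnique_mem (Finset.mem_insert_self a s)
  have hsub : ∀ t ∈ Q.parts, t ⊆ insert a s := fun t ht => Q.subset ht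
  -- Remove `a` from its block `T`, and discard the block if nothing is left of it.
  let P : Finpartition s :=
    Finpartition.ofExistsUnique ((insert (T.erase a) (Q.parts.erase T)).erase ∅)
      (by
        intro p hp b hb
        have key : p ⊆ insert a s ∧ a ∉ p := by
          rcases Finset.mem_insert.1 (Finset.mem_of_mem_erase hp) with rfl | h
          · exact ⟨(Finset.erase_subset _ _).trans (hsub T hT), by simp⟩
          · obtain ⟨h1, h2⟩ := Finset.mem_erase.1 h
            exact ⟨hsub p h2, fun h3 => h1 (hTu p ⟨h2, h3⟩)⟩
        rcases Finset.mem_insert.1 (key.1 hb) with rfl | h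
        · exact absurd hb key.2
        · exact h)
      (by
        intro b hb
        have hba : b ≠ a := fun h => ha (h ▸ hb)
        obtain ⟨t₀, ⟨ht₀, hbt₀⟩, huniq⟩ := Q.existsUnique_mem (Finset.mem_insert_of_mem hb)
        by_cases h : t₀ = T
        · subst h
          refine ⟨t₀.erase a, ⟨?_, by simp [hba, hbt₀]⟩, ?_⟩
          · refine Finset.mem_erase.2 ⟨?_, Finset.mem_insert_self _ _⟩
            exact Finset.ne_empty_of_mem (Finset.mem_erase.2 ⟨hba, hbt₀⟩)
          · rintro t ⟨ht, hbt⟩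
            rcases Finset.mem_insert.1 (Finset.mem_of_mem_erase ht) with rfl | h
            · rfl
            · obtain ⟨h1, h2⟩ := Finset.mem_erase.1 h
              exact absurd (huniq t ⟨h2, hbt⟩) h1
        · refine ⟨t₀, ⟨?_, hbt₀⟩, ?_⟩
          · refine Finset.mem_erase.2 ⟨Finset.ne_empty_of_mem hbt₀, ?_⟩
            exact Finset.mem_insert_of_mem (Finset.mem_erase.2 ⟨h, ht₀⟩)
          · rintro t ⟨ht, hbt⟩
            rcases Finset.mem_insert.1 (Finset.mem_of_mem_erase ht) with rfl | h'
            · exact absurd (huniq T ⟨hT, Finset.mem_of_mem_erase hbt⟩).symm h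
            · exact huniq t ⟨Finset.mem_of_mem_erase h', hbt⟩)
      (by simp)
  have hP : P.parts = (insert (T.erase a) (Q.parts.erase T)).erase ∅ := rfl
  have hB : T.erase a ∈ insert ∅ P.parts := by
    rw [hP]
    by_cases h : T.erase a = ∅
    · simp [h]
    · exact Finset.mem_insert_of_mem (Finset.mem_erase.2 ⟨h, Finset.mem_insert_self _ _⟩)
  refine ⟨P, T.erase a, hB, ?_⟩
  apply Finpartition.ext
  have hnot : T.erase a ∉ Q.parts.erase T := by
    intro h
    obtain ⟨h1, h2⟩ := Finset.mem_erase.1 h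
    obtain ⟨b, hb⟩ := Q.nonempty_of_mem_parts h2
    exact h1 (Q.eq_of_mem_parts h2 hT hb (Finset.mem_of_mem_erase hb))
  have hempty : ∅ ∉ Q.parts.erase T := fun h =>
    Q.empty_notMem_parts (Finset.mem_of_mem_erase h)
  rw [insertAt_parts, hP, Finset.insert_erase haT, Finset.erase_right_comm,
    Finset.erase_insert hnot, Finset.erase_eq_of_notMem hempty, Finset.insert_erase hT]

/-- A partition of `insert a s` amounts to a partition of `s` together with the block which `a`
joins, the empty set standing for a new block. -/
lemma sum_finpartition_insert {M : Type*} [AddCommMonoid M] {s : Finset α} {a : α} (ha : a ∉ s)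
    (w : Finset (Finset α) → M) :
    ∑ Q : Finpartition (insert a s), w Q.parts =
      ∑ P : Finpartition s, ∑ B ∈ insert ∅ P.parts,
        w (insert (insert a B) (P.parts.erase B)) := by
  rw [Finset.sum_sigma']
  symm
  refine Finset.sum_bij
    (fun p hp => insertAt ha p.1 p.2 (Finset.mem_sigma.1 hp).2) (fun _ _ => Finset.mem_univ _)
    ?_ ?_ (fun _ _ => rfl)
  · rintro ⟨P, B⟩ h ⟨P', B'⟩ h' he
    obtain ⟨rfl, rfl⟩ := insertAt_injective ha P P' B B' _ _ he
    rfl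
  · intro Q _
    obtain ⟨P, B, hB, h⟩ := insertAt_surjective ha Q
    exact ⟨⟨P, B⟩, Finset.mem_sigma.2 ⟨Finset.mem_univ _, hB⟩, h⟩

end Partitions

section Nest

variable {A : Type*} [CommRing A]

lemma nest_cons (d : A → A) (y : A) {l : List A} (hl : l ≠ []) :
    nest d (y :: l) = y * d (nest d l) := by
  cases l with
  | nil => exact absurd rfl hl
  | cons z l => rfl

lemma sort_insert_of_lt {i : ℕ} {a : Fin i} {s : Finset (Fin i)} (h : ∀ b ∈ s, a < b) :
    (insert a s).sort (· ≤ ·) = a :: s.sort (· ≤ ·) :=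
  Finset.sort_insert _ (fun b hb => (h b hb).le) (fun ha => lt_irrefl a (h a ha))

lemma eta_singleton (d : A → A) {i : ℕ} (f : Fin i → A) (a : Fin i) : eta d f {a} = f a := by
  simp [eta, nest]

lemma eta_insert (d : A → A) {i : ℕ} (f : Fin i → A) {a : Fin i} {B : Finset (Fin i)}
    (hB : B.Nonempty) (h : ∀ b ∈ B, a < b) : eta d f (insert a B) = f a * d (eta d f B) := by
  rw [eta, sort_insert_of_lt h, List.map_cons, nest_cons, eta]
  intro h0
  apply hB.ne_empty
  have := congrArg List.length h0
  simpa using this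

lemma map_prod_leibniz {ι : Type*} [DecidableEq ι] (d : A → A)
    (hleib : ∀ x y : A, d (x * y) = d x * y + x * d y) (S : Finset ι) (g : ι → A) :
    d (∏ i ∈ S, g i) = ∑ i ∈ S, d (g i) * ∏ j ∈ S.erase i, g j := by
  induction S using Finset.induction_on with
  | empty => simpa using hleib 1 1
  | insert a S ha ih =>
    rw [Finset.prod_insert ha, hleib, ih, Finset.sum_insert ha, Finset.erase_insert ha,
      Finset.mul_sum]
    congr 1
    refine Finset.sum_congr rfl fun i hi => ?_
    have hia : a ≠ i := fun h => ha (h ▸ hi)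
    rw [Finset.erase_insert_of_ne hia, Finset.prod_insert (fun h => ha (Finset.mem_of_mem_erase h))]
    ring

/-- The expansion for the indices in `s`, with all set partitions of `s` summed together. -/
lemma nest_sort_eq_sum (d : A → A) (hadd : ∀ x y : A, d (x + y) = d x + d y)
    (hleib : ∀ x y : A, d (x * y) = d x * y + x * d y) {i : ℕ} (f : Fin i → A) (x : A)
    (s : Finset (Fin i)) :
    nest d ((s.sort (· ≤ ·)).map f ++ [x]) =
      ∑ P : Finpartition s, (∏ I ∈ P.parts, eta d f I) * d^[P.parts.card] x := by
  induction s using Finset.induction_on_min with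
  | empty =>
    have : ∀ P : Finpartition (∅ : Finset (Fin i)), P.parts = ∅ :=
      fun P => P.parts_eq_empty_iff.2 rfl
    simp only [this]
    have : Fintype.card (Finpartition (∅ : Finset (Fin i))) = 1 :=
      Fintype.card_eq_one_iff.2 ⟨⊥, fun P => Finpartition.ext (by rw [this, this])⟩
    simp [nest, this]
  | insert a s h ih =>
    have ha : a ∉ s := fun ha => lt_irrefl a (h a ha)
    have hsum : ∀ g : Finpartition s → A, d (∑ P, g P) = ∑ P, d (g P) :=
      fun g => map_sum (AddMonoidHom.mk' d hadd) g _
    rw [sort_insert_of_lt h, List.map_cons, List.cons_append, nest_cons _ _ (by simp), ih,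
      sum_finpartition_insert ha (fun S => (∏ I ∈ S, eta d f I) * d^[S.card] x), hsum,
      Finset.mul_sum]
    refine Finset.sum_congr rfl fun P _ => ?_
    rw [Finset.sum_insert P.empty_notMem_parts, hleib, map_prod_leibniz d hleib, add_comm, mul_add]
    congr 1
    · have hn := insert_notMem_erase_parts ha P ∅
      rw [Finset.prod_insert hn, Finset.card_insert_of_notMem hn,
        Finset.erase_eq_of_notMem P.empty_notMem_parts, insert_empty_eq, eta_singleton,
        Function.iterate_succ_apply', mul_assoc]
    · rw [Finset.sum_mul, Finset.mul_sum]
      refine Finset.sum_congr rfl fun B hB => ?_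
      have hn := insert_notMem_erase_parts ha P B
      rw [Finset.prod_insert hn, Finset.card_insert_of_notMem hn,
        Finset.card_erase_add_one hB,
        eta_insert d f (P.nonempty_of_mem_parts hB) (fun b hb => h b (P.subset hB hb))]
      ring

end Nest

/-- the identity of ℚ-linear endomorphisms
`(μ_{f₁}∘d)∘⋯∘(μ_{f_i}∘d) = Σ_{k=1}^{i} Σ_{{I₁,…,I_k}} μ_{η(I₁)⋯η(I_k)} ∘ d^k`,
the inner sum running over the set partitions of `{1,…,i}` into `k` nonempty
blocks (stated pointwise at `x`; the left side applied to `x` is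
`f₁·d(f₂·d(⋯ f_i·d(x)⋯))`). -/
theorem mu_d_composition_eq_sum_partitions {A : Type*} [CommRing A] [Algebra ℚ A]
    (d : A → A)
    (hadd : ∀ x y : A, d (x + y) = d x + d y)
    (hleib : ∀ x y : A, d (x * y) = d x * y + x * d y)
    (i : ℕ) (hi : 1 ≤ i) (f : Fin i → A) (x : A) :
    nest d (List.ofFn f ++ [x]) =
      ∑ k ∈ Finset.Icc 1 i,
        ∑ᶠ P ∈ {P : Finpartition (Finset.univ : Finset (Fin i)) | P.parts.card = k},
          (∏ I ∈ P.parts, eta d f I) * d^[k] x := by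
  have hmain := nest_sort_eq_sum d hadd hleib f x Finset.univ
  rw [Fin.sort_univ, ← List.ofFn_eq_map] at hmain
  have hmaps : ∀ P ∈ (Finset.univ : Finset (Finpartition (Finset.univ : Finset (Fin i)))),
      P.parts.card ∈ Finset.Icc 1 i := by
    intro P _
    have hne : (Finset.univ : Finset (Fin i)) ≠ ⊥ :=
      Finset.ne_empty_of_mem (Finset.mem_univ ⟨0, hi⟩)
    refine Finset.mem_Icc.2 ⟨(P.parts_nonempty hne).card_pos, ?_⟩
    simpa using P.card_parts_le_card
  rw [hmain, ← Finset.sum_fiberwise_of_maps_to hmaps]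
  refine Finset.sum_congr rfl fun k _ => ?_
  rw [← Finset.coe_filter_univ, finsum_mem_coe_finset]
  refine Finset.sum_congr rfl fun P hP => ?_
  rw [(Finset.mem_filter.1 hP).2]
end

section
/- Let p = (p₁ ≥ ⋯ ≥ p_k ≥ 1) be a partition of n with k parts, and let σ(p) := ∏_j m_j!, where m_j is the multiplicity of the value j among the parts of p. For a nonempty subset I ⊆ {1,…,k} write p_I := Σ_{i∈I} p_i and M(I) := p_I! / ∏_{i∈I} p_i!. Then σ(p)·N_p = Σ (−1)^{k+h} · (∏_{ℓ=1}^{h} |I_ℓ|! · M(I_ℓ)) · (n+h)! / ∏_{ℓ=1}^{h} (p_{I_ℓ}+1)!, where the sum runs over all set partitions of {1,…,k} into h nonempty blocks I₁,…,I_h, for h = 1,…,k. -/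
/-!
By double counting, `σ(p) · N_p` is the number `A(p)` of pairs consisting of a subexceedent function
on `n` points and an injection `j` of the indices such that the fiber over `j i` has size `p i` and
all other fibers are empty: for a function of the right type, the admissible labellings of its
fibers form a torsor under the stabilizer of `p`, which has `σ(p)` elements
(`symm_mul_card_eq_numMarked`).

Removing the last point of such a pair lowers a single part `p i` by one. If the part stays positive,
the remaining pair is counted by `A` again. If it becomes `0`, the label `j i` is no longer
constrained by the function and can be any of the `n - (k - 1)` points not used by the other
labels, so the part can be deleted at the cost of this factor.

The right-hand side times `∏ (p i)!` is `∑ (-1)^(k+h) (n+h)! ∏ |I|!/(p_I + 1)` over the set partitions,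
and satisfies the same recursion. Lowering a part: `(n+h)! = (n+h-1)! ∑ I, (p_I + 1)`, and each
summand is distributed over the elements of `I` in the proportions `p i / p_I` (`signedSum_peel`).
Deleting a vanishing part `i`: a partition of the remaining indices into `h` blocks is extended
either by the block `{i}`, which multiplies the term by `n' + h + 1` with `n'` the sum of the
parts, or by putting `i` into a block `I`, which multiplies it by `-(|I| + 1)`. As
`∑ I, (|I| + 1) = (k - 1) + h`, the total factor is `n' + 1 - (k - 1)`, independently of the partition
(`signedSum_insert_zero`), and `n' + 1 = n`.
-/

/-- `Θ(φ)`: the multiset of nonzero fiber cardinalities `|φ⁻¹(j)|`, `j ∈ {1,…,n}`,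
of a map `φ : Fin n → Fin n`. -/
def fiberMultiset {n : ℕ} (φ : Fin n → Fin n) : Multiset ℕ :=
  ((Finset.univ.val : Multiset (Fin n)).map
    (fun j => (Finset.univ.filter (fun t => φ t = j)).card)).filter (· ≠ 0)

/-! ### Set partitions and the signed sum -/

/-- The set partitions of `S`, each recorded only by its finset of blocks. -/
def setPartitions {ι : Type*} [DecidableEq ι] (S : Finset ι) :
    Finset (Finset (Finset ι)) :=
  Finset.univ.image fun P : Finpartition S => P.parts

section
open Finset

variable {ι : Type*} [DecidableEq ι]

lemma mem_setPartitions {S : Finset ι} {X : Finset (Finset ι)} :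
    X ∈ setPartitions S ↔ ∅ ∉ X ∧ (∀ I ∈ X, ∀ J ∈ X, ∀ a ∈ I, a ∈ J → I = J) ∧
      ∀ a, a ∈ S ↔ ∃ I ∈ X, a ∈ I := by
  classical
  unfold setPartitions
  simp only [mem_image, mem_univ, true_and]
  constructor
  · rintro ⟨P, rfl⟩
    refine ⟨P.bot_notMem, fun I hI J hJ a ha hb => P.eq_of_mem_parts hI hJ ha hb,
      fun a => ⟨fun h => P.exists_mem h, fun ⟨I, hI, ha⟩ => P.subset hI ha⟩⟩
  · rintro ⟨h1, h2, h3⟩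
    refine ⟨Finpartition.ofExistsUnique X (fun I hI a ha => (h3 a).2 ⟨I, hI, ha⟩) ?_ h1, rfl⟩
    intro a ha
    obtain ⟨I, hI, haI⟩ := (h3 a).1 ha
    exact ⟨I, ⟨hI, haI⟩, fun J hJ => h2 J hJ.1 I hI a hJ.2 haI⟩

lemma sum_setPartitions (S : Finset ι) (g : Finset (Finset ι) → ℚ) :
    ∑ X ∈ setPartitions S, g X = ∑ᶠ P : Finpartition S, g P.parts := by
  classical
  rw [finsum_eq_sum_of_fintype, setPartitions, sum_image]
  · intro P _ Q _ h
    exact Finpartition.ext h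

lemma setPartitions_empty : setPartitions (∅ : Finset ι) = {∅} := by
  ext X
  rw [mem_setPartitions, mem_singleton]
  constructor
  · rintro ⟨h1, -, h3⟩
    rw [eq_empty_iff_forall_notMem]
    intro I hI
    rcases I.eq_empty_or_nonempty with rfl | ⟨a, ha⟩
    · exact h1 hI
    · simpa using (h3 a).2 ⟨I, hI, ha⟩
  · rintro rfl
    simp

/-- A set partition of `insert i S` arises from exactly one set partition of `S`, either by adding
the block `{i}` or by adjoining `i` to one of the blocks. -/
lemma sum_setPartitions_insert {S : Finset ι} {i : ι} (hi : i ∉ S)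
    (g : Finset (Finset ι) → ℚ) :
    ∑ X ∈ setPartitions (insert i S), g X = ∑ X ∈ setPartitions S,
      (g (insert {i} X) + ∑ I ∈ X, g (insert (insert i I) (X.erase I))) := by
  classical
  rw [sum_add_distrib, ← sum_filter_add_sum_filter_not _ (fun X => {i} ∈ X)]
  congr 1
  · refine sum_nbij' (fun X => X.erase {i}) (fun X => insert {i} X) ?_ ?_ ?_ ?_ ?_
    · intro X hX
      obtain ⟨hX, hiX⟩ := mem_filter.1 hX
      rw [mem_setPartitions] at hX ⊢
      obtain ⟨h1, h2, h3⟩ := hX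
      refine ⟨by simp [h1], by grind, ?_⟩
      intro a
      have := h3 a
      have := h2 {i} hiX
      grind
    · intro X hX
      rw [mem_setPartitions] at hX
      rw [mem_filter, mem_setPartitions]
      obtain ⟨h1, h2, h3⟩ := hX
      have : ∀ I ∈ X, i ∉ I := fun I hI h => hi ((h3 i).2 ⟨I, hI, h⟩)
      refine ⟨⟨?_, ?_, ?_⟩, by simp⟩
      · grind
      · grind
      · grind
    · intro X hX
      exact insert_erase (mem_filter.1 hX).2
    · intro X hX
      rw [mem_setPartitions] at hX
      refine erase_insert fun h => hi ((hX.2.2 i).2 ⟨_, h, by simp⟩)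
    · intro X hX
      simp only [insert_erase (mem_filter.1 hX).2]
  · rw [sum_sigma']
    symm
    refine sum_nbij (fun x => insert (insert i x.2) (x.1.erase x.2)) ?_ ?_ ?_ ?_
    · rintro ⟨X, I⟩ hX
      obtain ⟨hX, hI⟩ := mem_sigma.1 hX
      rw [mem_setPartitions] at hX
      rw [mem_filter, mem_setPartitions]
      obtain ⟨h1, h2, h3⟩ := hX
      dsimp only at *
      have hn : ∀ I ∈ X, i ∉ I := fun I hI h => hi ((h3 i).2 ⟨I, hI, h⟩)
      refine ⟨⟨?_, ?_, ?_⟩, ?_⟩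
      · grind
      · grind
      · intro a
        have := h3 a
        constructor
        · intro ha
          by_cases h : a ∈ insert i I
          · exact ⟨_, mem_insert_self _ _, h⟩
          · grind
        · grind
      · intro h
        rcases mem_insert.1 h with h | h
        · have : I = ∅ := by
            rw [eq_empty_iff_forall_notMem]
            intro a ha
            have : a ∈ ({i} : Finset ι) := h ▸ mem_insert_of_mem ha
            rw [mem_singleton] at this
            exact hn I hI (this ▸ ha)
          exact h1 (this ▸ hI)
        · exact hn _ (mem_of_mem_erase h) (by simp)
    · rintro ⟨X, I⟩ hX ⟨Y, J⟩ hY h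
      obtain ⟨hX, hI⟩ := mem_sigma.1 (mem_coe.1 hX)
      obtain ⟨hY, hJ⟩ := mem_sigma.1 (mem_coe.1 hY)
      rw [mem_setPartitions] at hX hY
      dsimp only at *
      have hnX : ∀ I ∈ X, i ∉ I := fun I hI h => hi ((hX.2.2 i).2 ⟨I, hI, h⟩)
      have hnY : ∀ I ∈ Y, i ∉ I := fun I hI h => hi ((hY.2.2 i).2 ⟨I, hI, h⟩)
      have e1 : insert i I = insert i J := by
        have : insert i I ∈ insert (insert i J) (Y.erase J) := h ▸ mem_insert_self _ _
        rcases mem_insert.1 this with h | h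
        · exact h
        · exact absurd (mem_insert_self _ _) (hnY _ (mem_of_mem_erase h))
      have e2 : I = J := by
        rw [← erase_insert (hnX I hI), e1, erase_insert (hnY J hJ)]
      subst e2
      have e3 : X.erase I = Y.erase I := by
        have := congrArg (fun Z => Z.erase (insert i I)) h
        rwa [erase_insert, erase_insert] at this
        · exact fun h => hnY _ (mem_of_mem_erase h) (mem_insert_self _ _)
        · exact fun h => hnX _ (mem_of_mem_erase h) (mem_insert_self _ _)
      have e4 : X = Y := by rw [← insert_erase hI, e3, insert_erase hJ]
      subst e4
      rfl
    · intro X hX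
      obtain ⟨hX, hiX⟩ := mem_filter.1 (mem_coe.1 hX)
      rw [mem_setPartitions] at hX
      obtain ⟨h1, h2, h3⟩ := hX
      obtain ⟨B, hB, hiB⟩ := (h3 i).1 (mem_insert_self _ _)
      have hne : B.erase i ≠ ∅ := by
        intro h
        rcases erase_eq_empty_iff .. |>.1 h with h | h
        · exact h1 (h ▸ hB)
        · exact hiX (h ▸ hB)
      obtain ⟨b, hb⟩ := nonempty_iff_ne_empty.2 hne
      -- a common element `b` of `B.erase i` and `B` would force these two blocks to be equal
      have hnot : B.erase i ∉ X.erase B := by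
        intro h
        have h' := mem_of_mem_erase h
        exact (ne_of_mem_erase h) (h2 _ h' B hB b hb (mem_of_mem_erase hb))
      refine ⟨⟨insert (B.erase i) (X.erase B), B.erase i⟩, ?_, ?_⟩
      · rw [mem_coe, mem_sigma]
        refine ⟨?_, mem_insert_self _ _⟩
        rw [mem_setPartitions]
        refine ⟨?_, ?_, ?_⟩
        · grind
        · grind
        · intro a
          have h3a := h3 a
          constructor
          · intro ha
            have hai : a ≠ i := fun h => hi (h ▸ ha)
            obtain ⟨I, hI, haI⟩ := h3a.1 (mem_insert_of_mem ha)
            by_cases hIB : I = B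
            · exact ⟨_, mem_insert_self _ _, mem_erase.2 ⟨hai, hIB ▸ haI⟩⟩
            · exact ⟨I, mem_insert_of_mem (mem_erase.2 ⟨hIB, hI⟩), haI⟩
          · rintro ⟨I, hI, haI⟩
            rcases mem_insert.1 hI with h | h
            · have : a ∈ insert i S := h3a.2 ⟨B, hB, by grind⟩
              grind
            · have hIX := mem_of_mem_erase h
              have : a ∈ insert i S := h3a.2 ⟨I, hIX, haI⟩
              rcases mem_insert.1 this with rfl | h'
              · exact absurd (h2 _ hIX _ hB _ haI hiB) (ne_of_mem_erase h)
              · exact h'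
      · dsimp only
        rw [erase_insert hnot, insert_erase hiB, insert_erase hB]
    · intro x _
      rfl

/-- The weight `|I|! / (q_I + 1)` of a block `I`, where `q_I = ∑ i ∈ I, q i`. -/
noncomputable def blockWeight (q : ι → ℕ) (I : Finset ι) : ℚ :=
  (I.card.factorial : ℚ) / ((∑ i ∈ I, q i : ℕ) + 1)

/-- The term of the closed formula attached to the set partition `X` of `S`, multiplied by
`∏ i ∈ S, (q i)!`. The entries of `q` may vanish. -/
noncomputable def partitionTerm (S : Finset ι) (q : ι → ℕ) (X : Finset (Finset ι)) : ℚ :=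
  (-1) ^ (S.card + X.card) * ((∑ i ∈ S, q i) + X.card).factorial * ∏ I ∈ X, blockWeight q I

/-- The right-hand side of the closed formula for the parts `q i`, `i ∈ S`, multiplied by
`∏ i ∈ S, (q i)!`. -/
noncomputable def signedSum (S : Finset ι) (q : ι → ℕ) : ℚ :=
  ∑ X ∈ setPartitions S, partitionTerm S q X

/-- Summing over a set partition block by block. -/
lemma sum_blocks {M : Type*} [AddCommMonoid M] {S : Finset ι} {X : Finset (Finset ι)}
    (hX : X ∈ setPartitions S) (f : ι → M) : ∑ I ∈ X, ∑ i ∈ I, f i = ∑ i ∈ S, f i := by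
  rw [mem_setPartitions] at hX
  obtain ⟨h1, h2, h3⟩ := hX
  rw [← sum_biUnion]
  · apply sum_congr _ fun _ _ => rfl
    ext a
    rw [h3 a, mem_biUnion]
  · intro I hI J hJ hIJ
    refine disjoint_left.2 fun a ha hb => hIJ (h2 I hI J hJ a ha hb)

/-- A vanishing part can be deleted at the cost of a linear factor. With `h` blocks on `S` and
`n = ∑ a ∈ S, q a`, the new
block `{i}` contributes the factor `n + h + 1`, and adjoining `i` to a block `I` contributes
`-(|I| + 1)`; the latter sum to `-(|S| + h)`, so the total does not depend on the partition. -/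
lemma signedSum_insert_zero {S : Finset ι} {i : ι} (hi : i ∉ S) (q : ι → ℕ) (hq : q i = 0) :
    signedSum (insert i S) q = ((∑ a ∈ S, q a : ℕ) + 1 - S.card : ℚ) * signedSum S q := by
  unfold signedSum
  rw [sum_setPartitions_insert hi, mul_sum]
  refine sum_congr rfl fun X hX => ?_
  have hX' := mem_setPartitions.1 hX
  have hn : ∀ I ∈ X, i ∉ I := fun I hI h => hi ((hX'.2.2 i).2 ⟨I, hI, h⟩)
  have hs : ∑ a ∈ insert i S, q a = ∑ a ∈ S, q a := by rw [sum_insert hi, hq, zero_add]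
  have A : partitionTerm (insert i S) q (insert {i} X)
      = ((∑ a ∈ S, q a : ℕ) + X.card + 1 : ℚ) * partitionTerm S q X := by
    have h : {i} ∉ X := fun h => hn _ h (mem_singleton_self i)
    unfold partitionTerm
    rw [hs, prod_insert h, card_insert_of_notMem h, card_insert_of_notMem hi,
      ← add_assoc (∑ a ∈ S, q a), Nat.factorial_succ]
    have : blockWeight q {i} = 1 := by simp [blockWeight, hq]
    rw [this]
    push_cast
    ring
  have B : ∀ I ∈ X, partitionTerm (insert i S) q (insert (insert i I) (X.erase I))
      = -((I.card : ℚ) + 1) * partitionTerm S q X := by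
    intro I hI
    have h : insert i I ∉ X.erase I :=
      fun h => hn _ (mem_of_mem_erase h) (mem_insert_self _ _)
    unfold partitionTerm
    rw [hs, prod_insert h, card_insert_of_notMem h, card_insert_of_notMem hi,
      card_erase_add_one hI, ← mul_prod_erase X _ hI]
    have : blockWeight q (insert i I) = (I.card + 1) * blockWeight q I := by
      simp only [blockWeight, sum_insert (hn I hI), hq, zero_add,
        card_insert_of_notMem (hn I hI), Nat.factorial_succ]
      push_cast
      ring
    rw [this]
    ring
  rw [A, sum_congr rfl B, ← sum_mul, sum_neg_distrib, sum_add_distrib]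
  have hc : (∑ I ∈ X, (I.card : ℚ)) = S.card := by
    have := sum_blocks hX (fun _ => 1)
    simp only [← card_eq_sum_ones] at this
    exact_mod_cast this
  rw [hc]
  simp
  ring

lemma sum_update_pred {S : Finset ι} {i : ι} (hi : i ∈ S) (q : ι → ℕ) (hq : 0 < q i) :
    ∑ a ∈ S, Function.update q i (q i - 1) a + 1 = ∑ a ∈ S, q a := by
  rw [← add_sum_erase _ _ hi, ← add_sum_erase _ q hi, Function.update_self,
    sum_congr rfl fun a ha => Function.update_of_ne (ne_of_mem_erase ha) _ _]
  omega

/-- The Pascal-type recursion for `signedSum`, coming from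
`n + h = ∑ I, (q_I + 1)` and `q_I = ∑ i ∈ I, q i`. It holds term by term. -/
lemma signedSum_peel {S : Finset ι} (hS : S.Nonempty) (q : ι → ℕ) (hq : ∀ i ∈ S, 0 < q i) :
    signedSum S q = ∑ i ∈ S, (q i : ℚ) * signedSum S (Function.update q i (q i - 1)) := by
  unfold signedSum
  simp_rw [mul_sum]
  rw [sum_comm]
  refine sum_congr rfl fun X hX => ?_
  have hX' := mem_setPartitions.1 hX
  rw [← sum_blocks hX]
  obtain ⟨m, hm⟩ : ∃ m, ∑ a ∈ S, q a = m + 1 := by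
    obtain ⟨i, hi⟩ := hS
    exact ⟨_, (sum_update_pred hi q (hq i hi)).symm⟩
  have key : ∀ I ∈ X, ∑ i ∈ I, (q i : ℚ) * partitionTerm S (Function.update q i (q i - 1)) X
      = ((∑ a ∈ I, q a : ℕ) + 1) *
        ((-1) ^ (S.card + X.card) * (m + X.card).factorial * ∏ I ∈ X, blockWeight q I) := by
    intro I hI
    have hsub : ∀ i ∈ I, i ∈ S := fun i hi => (hX'.2.2 i).2 ⟨I, hI, hi⟩
    have hpos : 0 < ∑ a ∈ I, q a := by
      refine sum_pos (fun a ha => hq a (hsub a ha)) ?_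
      exact nonempty_iff_ne_empty.2 fun h => hX'.1 (h ▸ hI)
    have : ∀ i ∈ I, (q i : ℚ) * partitionTerm S (Function.update q i (q i - 1)) X
        = q i * ((-1) ^ (S.card + X.card) * (m + X.card).factorial *
          ((I.card.factorial / (∑ a ∈ I, q a : ℕ)) * ∏ J ∈ X.erase I, blockWeight q J)) := by
      intro i hi
      unfold partitionTerm
      have e1 : ∑ a ∈ S, Function.update q i (q i - 1) a = m := by
        have := sum_update_pred (hsub i hi) q (hq i (hsub i hi))
        omega
      have e2 : blockWeight (Function.update q i (q i - 1)) I
          = I.card.factorial / (∑ a ∈ I, q a : ℕ) := by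
        unfold blockWeight
        rw [← sum_update_pred hi q (hq i (hsub i hi))]
        push_cast
        rfl
      have e3 : ∀ J ∈ X.erase I, blockWeight (Function.update q i (q i - 1)) J
          = blockWeight q J := by
        intro J hJ
        unfold blockWeight
        congr 3
        refine sum_congr rfl fun a ha => Function.update_of_ne ?_ _ _
        rintro rfl
        exact ne_of_mem_erase hJ (hX'.2.1 J (mem_of_mem_erase hJ) I hI a ha hi)
      rw [e1, ← mul_prod_erase X _ hI, e2, prod_congr rfl e3]
    rw [sum_congr rfl this, ← sum_mul, ← mul_prod_erase X _ hI, ← Nat.cast_sum]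
    have hne : ((∑ a ∈ I, q a : ℕ) : ℚ) ≠ 0 := by exact_mod_cast hpos.ne'
    have hne' : ((∑ a ∈ I, q a : ℕ) : ℚ) + 1 ≠ 0 := by positivity
    conv_rhs => rw [blockWeight]
    generalize ((∑ a ∈ I, q a : ℕ) : ℚ) = s at *
    field_simp
  rw [sum_congr rfl key, ← sum_mul, sum_add_distrib, ← Nat.cast_sum, sum_blocks hX, hm]
  unfold partitionTerm
  rw [hm, show m + 1 + X.card = (m + X.card) + 1 by ring, Nat.factorial_succ]
  simp
  ring
end

/-! ### Subexceedent functions with labelled fibers -/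

/-- Subexceedent functions with values indexed from `0`: the value at `t` lies in `{0, …, t}`. The
dependent codomain makes `Fin.snocEquiv` available for splitting off the last value. -/
abbrev SubExc (n : ℕ) : Type := (t : Fin n) → Fin ((t : ℕ) + 1)

/-- The cardinality of the fiber of `ψ` over `x`. All of `ℕ` is allowed for `x`, so that fiber sizes
for different `n` are functions of the same type. -/
def fiberSize {n : ℕ} (ψ : SubExc n) (x : ℕ) : ℕ :=
  (Finset.univ.filter fun t => (ψ t : ℕ) = x).card

open Classical in
/-- The number of subexceedent functions on `n` points with fiber sizes exactly `f`. -/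
noncomputable def numFib (n : ℕ) (f : ℕ → ℕ) : ℕ :=
  (Finset.univ.filter fun ψ : SubExc n => fiberSize ψ = f).card

section
open Finset

lemma fiberSize_of_le {n : ℕ} (ψ : SubExc n) {x : ℕ} (hx : n ≤ x) : fiberSize ψ x = 0 := by
  unfold fiberSize
  rw [card_eq_zero, filter_eq_empty_iff]
  intro t _ h
  have := (ψ t).2
  have := t.2
  omega

lemma numFib_zero (f : ℕ → ℕ) (hf : f = 0) : numFib 0 f = 1 := by
  classical
  subst hf
  unfold numFib
  rw [filter_true_of_mem]
  · simp
  · intro ψ _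
    funext x
    exact fiberSize_of_le ψ (Nat.zero_le _)

lemma numFib_eq_zero {n : ℕ} {f : ℕ → ℕ} {x : ℕ} (hx : n ≤ x) (hf : f x ≠ 0) :
    numFib n f = 0 := by
  classical
  unfold numFib
  rw [card_eq_zero, filter_eq_empty_iff]
  rintro ψ _ rfl
  exact hf (fiberSize_of_le ψ hx)

lemma fiberSize_snoc {n : ℕ} (ψ : SubExc n) (y : Fin (n + 1)) :
    fiberSize (Fin.snocEquiv (fun t : Fin (n + 1) => Fin ((t : ℕ) + 1)) (y, ψ) : SubExc (n + 1))
      = Function.update (fiberSize ψ) y (fiberSize ψ y + 1) := by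
  funext x
  unfold fiberSize
  rw [card_filter, Fin.sum_univ_castSucc, ← card_filter]
  simp only [Fin.snocEquiv, Equiv.coe_fn_mk, Fin.snoc_castSucc, Fin.snoc_last]
  by_cases h : x = y
  · subst h
    simp
  · rw [Function.update_of_ne h, if_neg (Ne.symm h)]
    rfl

/-- Splitting off the last value `x` of a subexceedent function. -/
lemma numFib_succ (n : ℕ) (f : ℕ → ℕ) :
    numFib (n + 1) f = ∑ x ∈ range (n + 1),
      if 0 < f x then numFib n (Function.update f x (f x - 1)) else 0 := by
  classical
  have h := (Fintype.sum_equiv (Fin.snocEquiv (fun t : Fin (n + 1) => Fin ((t : ℕ) + 1)))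
    (fun z => if fiberSize (Fin.snocEquiv (fun t : Fin (n + 1) => Fin ((t : ℕ) + 1)) z :
      SubExc (n + 1)) = f then 1 else 0)
    (fun ψ => if fiberSize (ψ : SubExc (n + 1)) = f then 1 else 0) (fun _ => rfl)).symm
  have h1 : numFib (n + 1) f = ∑ ψ : SubExc (n + 1), if fiberSize ψ = f then 1 else 0 := by
    unfold numFib
    rw [card_filter]
  rw [h1, h, Fintype.sum_prod_type, sum_range]
  refine Fintype.sum_congr _ _ fun y => ?_
  change ∑ ψ : SubExc n, _ = _
  split_ifs with hy
  · unfold numFib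
    rw [card_filter]
    refine Fintype.sum_congr _ _ fun ψ => ?_
    rw [fiberSize_snoc]
    congr 1
    rw [eq_iff_iff]
    constructor
    · rintro rfl
      simp
    · intro h
      rw [h]
      simp [Nat.sub_add_cancel hy]
  · refine sum_eq_zero fun ψ _ => ?_
    rw [fiberSize_snoc, if_neg]
    rintro rfl
    simp at hy

variable {ι : Type*}

/-- The function on `ℕ` that puts the mass `q i` at the point `j i` for each `i ∈ S`. -/
def push (S : Finset ι) (j : ι → ℕ) (q : ι → ℕ) (x : ℕ) : ℕ :=
  ∑ i ∈ S, if j i = x then q i else 0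

lemma push_apply {S : Finset ι} {j q : ι → ℕ} (hj : Set.InjOn j S) {i : ι} (hi : i ∈ S) :
    push S j q (j i) = q i := by
  unfold push
  rw [sum_eq_single_of_mem i hi, if_pos rfl]
  intro b hb hbi
  rw [if_neg fun h => hbi (hj hb hi h)]

lemma push_pos_iff [DecidableEq ι] {S : Finset ι} {j q : ι → ℕ} (hq : ∀ i ∈ S, 0 < q i) {x : ℕ} :
    0 < push S j q x ↔ x ∈ S.image j := by
  unfold push
  rw [sum_pos_iff, mem_image]
  constructor
  · rintro ⟨i, hi, h⟩
    refine ⟨i, hi, ?_⟩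
    by_contra hne
    simp [hne] at h
  · rintro ⟨i, hi, h⟩
    exact ⟨i, hi, by rw [if_pos h]; exact hq i hi⟩

lemma push_update [DecidableEq ι] {S : Finset ι} {j q : ι → ℕ} (hj : Set.InjOn j S)
    {i : ι} (hi : i ∈ S) :
    Function.update (push S j q) (j i) (push S j q (j i) - 1)
      = push S j (Function.update q i (q i - 1)) := by
  funext x
  by_cases hx : x = j i
  · subst hx
    rw [Function.update_self, push_apply hj hi, push_apply hj hi, Function.update_self]
  · rw [Function.update_of_ne hx]
    refine sum_congr rfl fun a _ => ?_
    by_cases ha : a = i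
    · subst ha
      rw [if_neg (Ne.symm hx), if_neg (Ne.symm hx)]
    · rw [Function.update_of_ne ha]

variable [DecidableEq ι] [Fintype ι]

open Classical in
/-- The injections of `S` into `{0, …, N - 1}`, extended by `0` outside `S` so that they live in a
type that does not depend on `S`. -/
noncomputable def markings (N : ℕ) (S : Finset ι) : Finset (ι → ℕ) :=
  (Fintype.piFinset fun i => if i ∈ S then range N else {0}).filter fun j => Set.InjOn j S

lemma mem_markings {N : ℕ} {S : Finset ι} {j : ι → ℕ} :
    j ∈ markings N S ↔ (∀ i ∈ S, j i < N) ∧ (∀ i ∉ S, j i = 0) ∧ Set.InjOn j S := by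
  unfold markings
  rw [mem_filter, Fintype.mem_piFinset, ← and_assoc]
  refine and_congr_left fun _ => ?_
  constructor
  · intro h
    refine ⟨fun i hi => ?_, fun i hi => ?_⟩
    · have := h i
      rwa [if_pos hi, mem_range] at this
    · have := h i
      rwa [if_neg hi, mem_singleton] at this
  · rintro ⟨h1, h2⟩ i
    split_ifs with hi
    · exact mem_range.2 (h1 i hi)
    · exact mem_singleton.2 (h2 i hi)

/-- The number of pairs `(j, ψ)` of an injection `j : S → {0, …, N - 1}` and a subexceedent function
`ψ` on `m` points whose fiber over `j i` has size `q i` and whose other fibers are empty. -/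
noncomputable def numMarked (S : Finset ι) (q : ι → ℕ) (N m : ℕ) : ℕ :=
  ∑ j ∈ markings N S, numFib m (push S j q)

/-- Removing the last point from a pair `(j, ψ)`: it lies in the fiber over `j i` for a unique
`i ∈ S`. -/
lemma numMarked_peel (S : Finset ι) (q : ι → ℕ) (hq : ∀ i ∈ S, 0 < q i) (n : ℕ) :
    numMarked S q (n + 1) (n + 1) =
      ∑ i ∈ S, numMarked S (Function.update q i (q i - 1)) (n + 1) n := by
  unfold numMarked
  rw [sum_comm]
  refine sum_congr rfl fun j hj => ?_
  obtain ⟨h1, -, h3⟩ := mem_markings.1 hj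
  rw [numFib_succ, ← sum_filter]
  have : (range (n + 1)).filter (fun x => 0 < push S j q x) = S.image j := by
    ext x
    rw [mem_filter, push_pos_iff hq, mem_range, and_iff_right_iff_imp, mem_image]
    rintro ⟨i, hi, rfl⟩
    exact h1 i hi
  rw [this, sum_image h3]
  exact sum_congr rfl fun i hi => by rw [push_update h3 hi]

/-- A subexceedent function on `n` points does not take the value `n`, so when all fibers are nonempty
the labels may be restricted to `{0, …, n - 1}`. -/
lemma numMarked_shrink (S : Finset ι) (q : ι → ℕ) (hq : ∀ i ∈ S, 0 < q i) (n : ℕ) :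
    numMarked S q (n + 1) n = numMarked S q n n := by
  unfold numMarked
  symm
  refine sum_subset ?_ ?_
  · intro j hj
    rw [mem_markings] at hj ⊢
    exact ⟨fun i hi => (hj.1 i hi).trans (Nat.lt_succ_self n), hj.2⟩
  · intro j hj hj'
    rw [mem_markings] at hj hj'
    obtain ⟨i, hi, hle⟩ : ∃ i ∈ S, n ≤ j i := by
      by_contra! h
      exact hj' ⟨h, hj.2⟩
    refine numFib_eq_zero hle ?_
    rw [push_apply hj.2.2 hi]
    exact Nat.ne_of_gt (hq i hi)

/-- The label `j i` of an empty fiber is any of the `N - |S|` points not used by the other labels. -/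
lemma numMarked_insert_zero {S : Finset ι} {i : ι} (hi : i ∉ S) (q : ι → ℕ) (hq : q i = 0)
    (N m : ℕ) :
    (numMarked (insert i S) q N m : ℚ) = ((N : ℚ) - S.card) * numMarked S q N m := by
  classical
  unfold numMarked
  have hne : ∀ a ∈ S, a ≠ i := fun a ha h => hi (h ▸ ha)
  have key : ∑ j ∈ markings N (insert i S), numFib m (push (insert i S) j q)
      = ∑ j ∈ markings N S, ∑ x ∈ range N \ S.image j, numFib m (push S j q) := by
    rw [sum_sigma']
    refine sum_nbij' (fun j => ⟨Function.update j i 0, j i⟩)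
      (fun z => Function.update z.1 i z.2) ?_ ?_ ?_ ?_ ?_
    · intro j hj
      obtain ⟨h1, h2, h3⟩ := mem_markings.1 hj
      have hup : ∀ a ∈ S, Function.update j i 0 a = j a :=
        fun a ha => Function.update_of_ne (hne a ha) _ _
      rw [mem_sigma, mem_markings, mem_sdiff, mem_range, mem_image]
      refine ⟨⟨fun a ha => ?_, fun a ha => ?_, fun a ha b hb h => ?_⟩,
        h1 i (mem_insert_self _ _), ?_⟩
      · dsimp only
        rw [hup a ha]
        exact h1 a (mem_insert_of_mem ha)
      · by_cases hai : a = i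
        · subst hai
          exact Function.update_self ..
        · exact (Function.update_of_ne hai _ _).trans (h2 a (by grind))
      · dsimp only at h
        rw [hup a ha, hup b hb] at h
        exact h3 (by simp_all) (by simp_all) h
      · rintro ⟨a, ha, h⟩
        dsimp only at h
        rw [hup a ha] at h
        exact hne a ha (h3 (by simp_all) (by simp) h)
    · rintro ⟨j, x⟩ hz
      rw [mem_sigma, mem_markings, mem_sdiff, mem_range, mem_image] at hz
      obtain ⟨⟨h1, h2, h3⟩, hx, hx'⟩ := hz
      dsimp only at *
      have hup : ∀ a ∈ S, Function.update j i x a = j a :=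
        fun a ha => Function.update_of_ne (hne a ha) _ _
      rw [mem_markings]
      refine ⟨fun a ha => ?_, fun a ha => ?_, ?_⟩
      · rcases mem_insert.1 ha with rfl | ha
        · rwa [Function.update_self]
        · rw [hup a ha]
          exact h1 a ha
      · rw [Function.update_of_ne (by grind)]
        exact h2 a (by grind)
      · rw [coe_insert, Set.injOn_insert (by simpa using hi)]
        refine ⟨fun a ha b hb h => ?_, ?_⟩
        · rw [hup a ha, hup b hb] at h
          exact h3 ha hb h
        · rintro ⟨a, ha, h⟩
          rw [hup a ha, Function.update_self] at h
          exact hx' ⟨a, ha, h⟩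
    · intro j _
      simp
    · rintro ⟨j, x⟩ hz
      rw [mem_sigma, mem_markings] at hz
      have : j i = 0 := hz.1.2.1 i hi
      simp [← this]
    · intro j _
      dsimp only
      congr 1
      funext x
      unfold push
      rw [sum_insert hi, hq, ite_self, zero_add]
      exact sum_congr rfl fun a ha => by rw [Function.update_of_ne (hne a ha)]
  rw [key, Nat.cast_sum, Nat.cast_sum, mul_sum]
  refine sum_congr rfl fun j hj => ?_
  obtain ⟨h1, -, h3⟩ := mem_markings.1 hj
  have hsub : S.image j ⊆ range N := by
    intro x hx
    obtain ⟨a, ha, rfl⟩ := mem_image.1 hx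
    exact mem_range.2 (h1 a ha)
  rw [sum_const, smul_eq_mul, card_sdiff_of_subset hsub, card_image_of_injOn h3, card_range,
    Nat.cast_mul, Nat.cast_sub]
  rw [← card_image_of_injOn h3]
  simpa using card_le_card hsub

/-- Both sides satisfy the same recursion: lower one part by `1`, and delete that part if it became
`0`. -/
lemma numMarked_eq_signedSum (n : ℕ) : ∀ (S : Finset ι) (q : ι → ℕ), (∀ i ∈ S, 0 < q i) →
    ∑ i ∈ S, q i = n →
    (numMarked S q n n : ℚ) * ∏ i ∈ S, ((q i).factorial : ℚ) = signedSum S q := by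
  induction n with
  | zero =>
    intro S q hq hn
    have hS : S = ∅ := by
      rw [eq_empty_iff_forall_notMem]
      intro i hi
      have := hq i hi
      have := (sum_eq_zero_iff.1 hn) i hi
      omega
    subst hS
    have h1 : markings 0 (∅ : Finset ι) = {0} := by
      ext j
      rw [mem_markings, mem_singleton]
      simp [funext_iff]
    unfold numMarked
    rw [h1, sum_singleton, numFib_zero _ (by funext x; simp [push])]
    simp [signedSum, setPartitions_empty, partitionTerm]
  | succ n ih =>
    intro S q hq hn
    have hS : S.Nonempty := by
      rw [nonempty_iff_ne_empty]
      rintro rfl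
      simp at hn
    rw [signedSum_peel hS q hq, numMarked_peel S q hq, Nat.cast_sum, sum_mul]
    refine sum_congr rfl fun i hi => ?_
    set q' := Function.update q i (q i - 1) with hq'
    have hqi := hq i hi
    have hn' : ∑ a ∈ S, q' a = n := by
      have := sum_update_pred hi q hqi
      rw [← hq'] at this
      omega
    have hself : q' i = q i - 1 := Function.update_self ..
    have hother : ∀ a ∈ S.erase i, q' a = q a :=
      fun a ha => Function.update_of_ne (ne_of_mem_erase ha) _ _
    have hprod : ∏ a ∈ S, ((q a).factorial : ℚ) = q i * ∏ a ∈ S, ((q' a).factorial : ℚ) := by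
      rw [← mul_prod_erase S _ hi, ← mul_prod_erase S (fun a => ((q' a).factorial : ℚ)) hi, hself,
        prod_congr rfl fun a ha => by rw [← hother a ha], ← mul_assoc]
      congr 1
      exact_mod_cast (Nat.mul_factorial_pred hqi.ne').symm
    rw [hprod, mul_left_comm]
    congr 1
    -- the lowered part `q i - 1` vanishes exactly when `q i = 1`, and is then deleted from `S`
    by_cases h1 : q i = 1
    · have hi' : i ∉ S.erase i := notMem_erase i S
      have hz : q' i = 0 := by omega
      have hpos : ∀ a ∈ S.erase i, 0 < q' a := fun a ha => by
        rw [hother a ha]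
        exact hq a (mem_of_mem_erase ha)
      have hn'' : ∑ a ∈ S.erase i, q' a = n := by
        rw [← add_sum_erase S q' hi, hz, zero_add] at hn'
        exact hn'
      have h := ih (S.erase i) q' hpos hn''
      rw [← insert_erase hi, numMarked_insert_zero hi' q' hz, signedSum_insert_zero hi' q' hz,
        prod_insert hi', hz, numMarked_shrink _ _ hpos, ← h, hn'']
      push_cast
      simp
      ring
    · have hpos : ∀ a ∈ S, 0 < q' a := fun a ha => by
        by_cases hai : a = i
        · subst hai
          omega
        · rw [hother a (mem_erase.2 ⟨hai, ha⟩)]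
          exact hq a ha
      rw [numMarked_shrink _ _ hpos]
      exact ih S q' hpos hn'

end

/-! ### Labellings and the symmetry factor -/

section
open Finset

variable {ι : Type*} [Fintype ι]

/-- Two families with the same multiset of values differ by a bijection of the index sets. -/
lemma exists_equiv_of_map_eq {α : Type*} [DecidableEq α] {T : Finset α} {f : α → ℕ} {p : ι → ℕ}
    (h : T.val.map f = univ.val.map p) : ∃ e : ι ≃ T, ∀ i, f (e i) = p i := by
  have hc : ∀ v, Nonempty ({i // p i = v} ≃ {x : T // f x = v}) := by
    intro v
    rw [← Fintype.card_eq, Fintype.card_subtype, Fintype.card_subtype]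
    have h' := congrArg (Multiset.count v) h
    rw [Multiset.count_map, Multiset.count_map] at h'
    have e1 : #{x : T | f x = v} = #{x ∈ T | f x = v} := by
      refine card_bij (fun x _ => x.1) ?_ ?_ ?_
      · intro x hx
        exact mem_filter.2 ⟨x.2, (mem_filter.1 hx).2⟩
      · intro x _ y _ h
        exact Subtype.ext h
      · intro x hx
        exact ⟨⟨x, (mem_filter.1 hx).1⟩, mem_filter.2 ⟨mem_univ _, (mem_filter.1 hx).2⟩, rfl⟩
    rw [e1]
    simp only [@eq_comm _ v] at h'
    exact h'.symm
  let e := fun v => (hc v).some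
  refine ⟨(Equiv.sigmaFiberEquiv p).symm.trans ((Equiv.sigmaCongrRight fun v => (e v)).trans
    (Equiv.sigmaFiberEquiv fun x : T => f x)), fun i => ?_⟩
  exact ((e (p i)) ⟨i, rfl⟩).2

variable [DecidableEq ι]

lemma eq_push_iff_of_injective {p : ι → ℕ} (hp : ∀ i, 0 < p i) {f : ℕ → ℕ} {j : ι → ℕ}
    (hj : Function.Injective j) :
    f = push univ j p ↔ (∀ i, f (j i) = p i) ∧ ∀ x, f x ≠ 0 → ∃ i, j i = x := by
  constructor
  · rintro rfl
    refine ⟨fun i => push_apply hj.injOn (mem_univ i), fun x hx => ?_⟩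
    have := (push_pos_iff (S := univ) (j := j) (fun i _ => hp i)).1 (Nat.pos_of_ne_zero hx)
    simpa using this
  · rintro ⟨h1, h2⟩
    funext x
    by_cases hx : ∃ i, j i = x
    · obtain ⟨i, rfl⟩ := hx
      rw [h1, push_apply hj.injOn (mem_univ i)]
    · have hz : push univ j p x = 0 := by
        by_contra h
        have := (push_pos_iff (S := univ) (j := j) (fun i _ => hp i)).1 (Nat.pos_of_ne_zero h)
        exact hx (by simpa using this)
      rw [hz]
      by_contra h
      exact hx (h2 x h)

open Classical in
/-- If the nonzero values of `f` are the `p i` as a multiset, then the injections `j` placing the mass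
`p i` of `f` at `j i` form a torsor under the permutations of the indices preserving `p`; there are
`∏ v, m_v!` of these, `m_v` being the multiplicity of `v`. -/
lemma card_markings_eq_push {n : ℕ} {p : ι → ℕ} (hp : ∀ i, 0 < p i) (hle : ∀ i, p i ≤ n)
    {f : ℕ → ℕ} (hf : ∀ x, n ≤ x → f x = 0) :
    #{j ∈ markings n (univ : Finset ι) | f = push univ j p} =
      if ((range n).val.map f).filter (· ≠ 0) = univ.val.map p then
        ∏ v ∈ Icc 1 n, (#{i | p i = v}).factorial else 0 := by
  set T : Finset ℕ := (range n).filter fun x => f x ≠ 0 with hT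
  have hTval : ((range n).val.map f).filter (· ≠ 0) = T.val.map f := by
    rw [Multiset.filter_map]
    rfl
  have hmT : ∀ x, x ∈ T ↔ f x ≠ 0 := by
    intro x
    rw [hT, mem_filter, mem_range, and_iff_right_iff_imp]
    intro h
    by_contra hx
    exact h (hf x (not_lt.1 hx))
  have hmem : ∀ j, j ∈ (markings n (univ : Finset ι)).filter (fun j => f = push univ j p) ↔
      Function.Injective j ∧ (∀ i, f (j i) = p i) ∧ ∀ x, f x ≠ 0 → ∃ i, j i = x := by
    intro j
    rw [mem_filter, mem_markings]
    constructor
    · rintro ⟨⟨-, -, h⟩, h'⟩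
      have hj : Function.Injective j := by simpa using h
      exact ⟨hj, (eq_push_iff_of_injective hp hj).1 h'⟩
    · rintro ⟨hj, h'⟩
      refine ⟨⟨fun i _ => ?_, by simp, hj.injOn⟩, (eq_push_iff_of_injective hp hj).2 h'⟩
      by_contra hi
      have := hp i
      rw [← h'.1 i, hf _ (not_lt.1 hi)] at this
      exact this.false
  rw [hTval]
  split_ifs with h
  · obtain ⟨e, he⟩ := exists_equiv_of_map_eq h
    have hej : Function.Injective fun i => (e i : ℕ) :=
      Subtype.val_injective.comp e.injective
    have hstab := DomMulAct.stabilizer_card' p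
    have hprod : ∏ v ∈ Icc 1 n, (#{i | p i = v}).factorial
        = ∏ v ∈ univ.image p, (Fintype.card {i // p i = v}).factorial := by
      symm
      simp only [Fintype.card_subtype]
      refine prod_subset ?_ ?_
      · intro v hv
        obtain ⟨i, -, rfl⟩ := mem_image.1 hv
        exact mem_Icc.2 ⟨hp i, hle i⟩
      · intro v _ hv
        rw [filter_false_of_mem, card_empty, Nat.factorial_zero]
        rintro i - rfl
        exact hv (mem_image_of_mem _ (mem_univ i))
    rw [hprod, ← hstab, Fintype.card_subtype]
    symm
    refine card_bij (fun g _ i => (e (g i) : ℕ)) ?_ ?_ ?_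
    · intro g hg
      have hg' := (mem_filter.1 hg).2
      rw [hmem]
      refine ⟨hej.comp g.injective, fun i => ?_, fun x hx => ?_⟩
      · rw [he]
        exact congrFun hg' i
      · refine ⟨g.symm (e.symm ⟨x, (hmT x).2 hx⟩), ?_⟩
        simp
    · intro g _ g' _ hgg
      ext i
      exact hej (congrFun hgg i)
    · intro j hj
      obtain ⟨h1, h2, h3⟩ := (hmem j).1 hj
      have hjT : ∀ i, j i ∈ T := fun i => (hmT _).2 (by rw [h2]; exact (hp i).ne')
      let g : ι → ι := fun i => e.symm ⟨j i, hjT i⟩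
      have hg : Function.Injective g := by
        intro a b hab
        have := e.symm.injective hab
        exact h1 (congrArg Subtype.val this)
      refine ⟨Equiv.ofBijective g (Finite.injective_iff_bijective.1 hg), ?_, ?_⟩
      · rw [mem_filter]
        refine ⟨mem_univ _, ?_⟩
        funext i
        simp [g, ← he, h2]
      · funext i
        simp [g]
  · rw [card_eq_zero, eq_empty_iff_forall_notMem]
    intro j hj
    obtain ⟨h1, h2, h3⟩ := (hmem j).1 hj
    apply h
    have : T = univ.map ⟨j, h1⟩ := by
      ext x
      rw [hmT, mem_map]
      constructor
      · intro hx
        obtain ⟨i, hi⟩ := h3 x hx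
        exact ⟨i, mem_univ i, hi⟩
      · rintro ⟨i, -, rfl⟩
        change f (j i) ≠ 0
        rw [h2]
        exact (hp i).ne'
    rw [this, map_val, Multiset.map_map]
    exact Multiset.map_congr rfl fun i _ => h2 i

lemma fiberMultiset_eq {n : ℕ} (ψ : SubExc n) (φ : Fin n → Fin n)
    (h : ∀ t, (φ t : ℕ) = ψ t) :
    fiberMultiset φ = ((range n).val.map (fiberSize ψ)).filter (· ≠ 0) := by
  unfold fiberMultiset
  congr 1
  rw [← Nat.Iio_eq_range, ← Fin.map_valEmbedding_univ, map_val, Multiset.map_map]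
  refine Multiset.map_congr rfl fun x _ => ?_
  simp only [Function.comp_apply, fiberSize, Fin.valEmbedding_apply, ← h, Fin.ext_iff]

/-- `SubExc n` is the set of maps `φ : Fin n → Fin n` with `φ t ≤ t` for all `t`. -/
def subExcEquiv (n : ℕ) : {φ : Fin n → Fin n // ∀ t, φ t ≤ t} ≃ SubExc n where
  toFun φ t := ⟨φ.1 t, Nat.lt_succ_of_le (φ.2 t)⟩
  invFun ψ := ⟨fun t => ⟨ψ t, lt_of_le_of_lt (Nat.le_of_lt_succ (ψ t).2) t.2⟩,
    fun t => Nat.le_of_lt_succ (ψ t).2⟩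
  left_inv _ := rfl
  right_inv _ := rfl

/-- Double counting: `σ(p) · N_p` counts the pairs of a subexceedent function and a labelling of its
nonempty fibers by the indices of the parts. -/
lemma symm_mul_card_eq_numMarked {n : ℕ} {p : ι → ℕ} (hp : ∀ i, 0 < p i) (hle : ∀ i, p i ≤ n) :
    (∏ v ∈ Icc 1 n, (#{i | p i = v}).factorial) *
      Nat.card {φ : Fin n → Fin n // (∀ t, φ t ≤ t) ∧ fiberMultiset φ = univ.val.map p}
      = numMarked (univ : Finset ι) p n n := by
  classical
  have hcard : Nat.card {φ : Fin n → Fin n // (∀ t, φ t ≤ t) ∧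
      fiberMultiset φ = univ.val.map p} =
      #{ψ : SubExc n | ((range n).val.map (fiberSize ψ)).filter (· ≠ 0) = univ.val.map p} := by
    rw [← Fintype.card_subtype, ← Nat.card_eq_fintype_card]
    refine Nat.card_congr ((Equiv.subtypeSubtypeEquivSubtypeInter _ _).symm.trans
      ((subExcEquiv n).subtypeEquiv fun φ => ?_))
    rw [fiberMultiset_eq (subExcEquiv n φ) φ.1 fun t => rfl]
  unfold numMarked numFib
  simp only [card_filter]
  rw [sum_comm]
  simp only [← card_filter]
  simp only [card_markings_eq_push hp hle fun x hx => fiberSize_of_le _ hx]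
  rw [← sum_filter, sum_const, smul_eq_mul, hcard, mul_comm]
end

/-- the closed inclusion-exclusion formula
`σ(p)·N_p = Σ (−1)^{k+h} (∏_ℓ |I_ℓ|!·M(I_ℓ)) · (n+h)!/∏_ℓ (p_{I_ℓ}+1)!`,
the sum running over all set partitions `{I₁,…,I_h}` of `{1,…,k}` (`h = 1,…,k`),
where `p = (p₁ ≥ ⋯ ≥ p_k ≥ 1)` is a partition of `n`,
`σ(p) = ∏_j m_j!` (`m_j` the multiplicity of `j` among the parts),
`p_I = Σ_{i∈I} p_i` and `M(I) = p_I!/∏_{i∈I} p_i!`. -/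
theorem sigma_Np_closed_formula (n k : ℕ) (hk : 1 ≤ k) (p : Fin k → ℕ)
    (hmono : ∀ i j : Fin k, i ≤ j → p j ≤ p i)
    (hpos : ∀ i, 1 ≤ p i)
    (hsum : ∑ i, p i = n) :
    ((∏ j ∈ Finset.Icc 1 n,
        Nat.factorial ((Finset.univ.filter (fun i => p i = j)).card) : ℕ) : ℚ) *
      (Nat.card {φ : Fin n → Fin n // (∀ j, φ j ≤ j) ∧
        fiberMultiset φ = Multiset.map p Finset.univ.val} : ℚ) =
    ∑ᶠ P : Finpartition (Finset.univ : Finset (Fin k)),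
      ((-1 : ℚ) ^ (k + P.parts.card) *
        (∏ I ∈ P.parts,
          (Nat.factorial I.card : ℚ) *
            ((Nat.factorial (∑ i ∈ I, p i) : ℚ) /
              ∏ i ∈ I, (Nat.factorial (p i) : ℚ))) *
        ((Nat.factorial (n + P.parts.card) : ℚ) /
          ∏ I ∈ P.parts, (Nat.factorial ((∑ i ∈ I, p i) + 1) : ℚ))) := by
  have hle : ∀ i, p i ≤ n := fun i => by
    rw [← hsum]
    exact Finset.single_le_sum (fun _ _ => Nat.zero_le _) (Finset.mem_univ i)
  have hF : (∏ i, ((p i).factorial : ℚ)) ≠ 0 :=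
    Finset.prod_ne_zero_iff.2 fun i _ => by exact_mod_cast (p i).factorial_ne_zero
  have h := numMarked_eq_signedSum n (Finset.univ : Finset (Fin k)) p (fun i _ => hpos i) hsum
  rw [← symm_mul_card_eq_numMarked hpos hle, ← eq_div_iff hF, Nat.cast_mul] at h
  rw [h, div_eq_iff hF, ← sum_setPartitions Finset.univ (fun X =>
    (-1 : ℚ) ^ (k + X.card) * (∏ I ∈ X, (Nat.factorial I.card : ℚ) *
      ((Nat.factorial (∑ i ∈ I, p i) : ℚ) / ∏ i ∈ I, (Nat.factorial (p i) : ℚ))) *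
      ((Nat.factorial (n + X.card) : ℚ) /
        ∏ I ∈ X, (Nat.factorial ((∑ i ∈ I, p i) + 1) : ℚ))), Finset.sum_mul]
  refine Finset.sum_congr rfl fun X hX => ?_
  -- the multiplicative form of `sum_blocks`, through `Additive ℚ`
  have hprod : ∏ i, ((p i).factorial : ℚ) = ∏ I ∈ X, ∏ i ∈ I, ((p i).factorial : ℚ) :=
    (sum_blocks (M := Additive ℚ) hX fun i => Additive.ofMul ((p i).factorial : ℚ)).symm
  have hw : ∏ I ∈ X, blockWeight p I = (∏ I ∈ X, (Nat.factorial I.card : ℚ) *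
      ((Nat.factorial (∑ i ∈ I, p i) : ℚ) / ∏ i ∈ I, (Nat.factorial (p i) : ℚ))) /
      (∏ I ∈ X, (Nat.factorial ((∑ i ∈ I, p i) + 1) : ℚ)) *
      ∏ I ∈ X, ∏ i ∈ I, ((p i).factorial : ℚ) := by
    rw [← Finset.prod_div_distrib, ← Finset.prod_mul_distrib]
    refine Finset.prod_congr rfl fun I _ => ?_
    have h1 : (∏ i ∈ I, ((p i).factorial : ℚ)) ≠ 0 :=
      Finset.prod_ne_zero_iff.2 fun i _ => by exact_mod_cast (p i).factorial_ne_zero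
    have h2 : ((∑ i ∈ I, p i).factorial : ℚ) ≠ 0 := by exact_mod_cast Nat.factorial_ne_zero _
    have h3 : ((∑ i ∈ I, p i : ℕ) : ℚ) + 1 ≠ 0 := by positivity
    rw [blockWeight, Nat.factorial_succ, Nat.cast_mul, Nat.cast_succ]
    field_simp
  unfold partitionTerm
  rw [hsum, hw, ← hprod, Finset.card_univ, Fintype.card_fin]
  ring
end
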